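/- Even (respectively odd) Lizorkin functions on ℝ are dense in the even (respectively odd) continuous functions vanishing at infinity: for every continuous f : ℝ → ℂ vanishing at infinity with f(−t) = f(t) for all t (respectively f(−t) = −f(t) for all t) and every ε > 0, there exists a Schwartz function φ : ℝ → ℂ with φ(−t) = φ(t) for all t (respectively φ(−t) = −φ(t)) and ∫_ℝ t^k φ(t) dt = 0 for every k ∈ ℕ, such that sup_{t ∈ ℝ} |f(t) − φ(t)| < ε. -/

import Mathlib

/-!
Smooth compactly supported functions are uniformly dense in the continuous functions vanishing at
infinity (`exists_schwartz_approx`, a smooth partition of unity argument), so it suffices to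
approximate a Schwartz function `g` by Lizorkin functions. The moments of a Schwartz function are,
up to nonzero constants, the derivatives at `0` of its Fourier transform, so a Schwartz function
whose Fourier transform vanishes near `0` is Lizorkin (`moment_eq_zero_of_fourier_eventually_zero`).
Removing from `𝓕 g` its part `η` in a small ball around `0` by a smooth cutoff changes `g` by `𝓕⁻ η`,
whose sup norm is at most `‖η‖₁`, hence at most a bound for `𝓕 g` times the length of the ball
(`exists_lizorkin_approx`). Finally, replacing an approximant `φ` by `(φ(t) + s φ(-t)) / 2` with
`s = ±1` imposes the parity of `f` while preserving both the moment conditions and the error bound.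
-/

open MeasureTheory Filter Topology
open scoped FourierTransform SchwartzMap ContDiff Manifold

theorem exists_schwartz_approx (f : ℝ → ℂ) (hf : Continuous f)
    (h0 : Tendsto f (cocompact ℝ) (𝓝 0)) (ε : ℝ) (hε : 0 < ε) :
    ∃ g : 𝓢(ℝ, ℂ), ∀ t, ‖f t - g t‖ < ε := by
  obtain ⟨R, hR⟩ : ∃ R : ℝ, ∀ t, R < |t| → ‖f t‖ < ε := by
    have h1 : ∀ᶠ t in cocompact ℝ, ‖f t‖ < ε := by
      have := h0.norm
      rw [norm_zero] at this
      exact this.eventually (gt_mem_nhds hε)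
    obtain ⟨R, -, hR⟩ := (Metric.hasBasis_cobounded_compl_closedBall (0 : ℝ)).eventually_iff.1
      (Metric.cobounded_eq_cocompact (α := ℝ) ▸ h1)
    exact ⟨R, fun t ht => hR (by simpa using ht)⟩
  -- The sections of these convex sets are the functions `ε`-close to `f` supported in
  -- `[-(R + 1), R + 1]`; locally, either `f x` or `0` is a constant section.
  obtain ⟨g, hg⟩ := exists_contMDiffMap_forall_mem_convex_of_local_const (n := ⊤) 𝓘(ℝ, ℝ)
    (t := fun x : ℝ => Metric.ball (f x) ε ∩ {y : ℂ | R + 1 ≤ |x| → y = 0})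
    (fun x => by
      refine (convex_ball _ _).inter ?_
      by_cases hx : R + 1 ≤ |x|
      · simp [hx]
      · simp [hx, convex_univ])
    (fun x => by
      by_cases hx : R + 1 ≤ |x|
      · refine ⟨0, ?_⟩
        filter_upwards [continuous_abs.continuousAt.eventually
          (lt_mem_nhds (show R < |x| by linarith))] with y hy
        exact ⟨by simpa [dist_eq_norm] using hR y hy, fun _ => rfl⟩
      · refine ⟨f x, ?_⟩
        filter_upwards [continuous_abs.continuousAt.eventually (gt_mem_nhds (not_le.1 hx)),
          hf.continuousAt.eventually (Metric.ball_mem_nhds (f x) hε)] with y hy hy'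
        exact ⟨by rwa [Metric.mem_ball, dist_comm], fun h => absurd h (not_le.2 hy)⟩)
  have hs : HasCompactSupport g := by
    refine HasCompactSupport.intro (isCompact_closedBall (0 : ℝ) (R + 1)) fun x hx => ?_
    refine (hg x).2 ?_
    simp only [Metric.mem_closedBall, dist_zero_right, Real.norm_eq_abs, not_le] at hx
    exact hx.le
  refine ⟨hs.toSchwartzMap g.contMDiff.contDiff, fun t => ?_⟩
  have := (hg t).1
  rw [Metric.mem_ball, dist_comm, dist_eq_norm] at this
  exact this

theorem moment_eq_zero_of_fourier_eventually_zero (φ : 𝓢(ℝ, ℂ))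
    (h : (𝓕 φ : 𝓢(ℝ, ℂ)) =ᶠ[𝓝 0] (0 : ℝ → ℂ)) (k : ℕ) : ∫ t : ℝ, (t : ℂ) ^ k * φ t = 0 := by
  have hi : ∀ n : ℕ, (n : ℕ∞) ≤ ⊤ → Integrable (fun x : ℝ => x ^ n • φ x) := fun n _ => by
    refine (φ.integrable_pow_mul volume n).mono' (by fun_prop) (ae_of_all _ fun x => ?_)
    simp
  have h1 := congrFun (Real.iteratedDeriv_fourier (n := k) hi le_top) 0
  rw [← SchwartzMap.fourier_coe, h.iteratedDeriv_eq k, Real.fourier_eq] at h1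
  have h2 : iteratedDeriv k (0 : ℝ → ℂ) 0 = 0 := by
    change iteratedDeriv k (fun _ => (0 : ℂ)) 0 = 0
    simp
  rw [h2] at h1
  have h3 : (∫ t : ℝ, (-2 * Real.pi * Complex.I) ^ k * ((t : ℂ) ^ k * φ t)) = 0 := by
    rw [h1]
    refine integral_congr_ae (ae_of_all _ fun t => ?_)
    simp only [inner_zero_right, neg_zero, AddChar.map_zero_eq_one, one_smul, smul_eq_mul]
    ring
  rw [integral_const_mul] at h3
  refine (mul_eq_zero.1 h3).resolve_left (pow_ne_zero _ ?_)
  simp [Real.pi_ne_zero]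

theorem exists_lizorkin_approx (g : 𝓢(ℝ, ℂ)) (ε : ℝ) (hε : 0 < ε) :
    ∃ φ : 𝓢(ℝ, ℂ), (∀ k : ℕ, ∫ t : ℝ, (t : ℂ) ^ k * φ t = 0) ∧ ∀ t, ‖g t - φ t‖ < ε := by
  obtain ⟨M, hM0, hM⟩ : ∃ M : ℝ, 0 < M ∧ ∀ x, ‖(𝓕 g : 𝓢(ℝ, ℂ)) x‖ ≤ M := by
    obtain ⟨M, hM, h⟩ := (𝓕 g : 𝓢(ℝ, ℂ)).decay 0 0
    exact ⟨M, hM, by simpa using h⟩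
  -- The error is at most `M * 2δ`, which this `δ` makes equal to `ε / 2`.
  set δ := ε / (4 * M) with hδ
  have hδ0 : 0 < δ := by positivity
  let χ : ContDiffBump (0 : ℝ) := ⟨δ / 2, δ, by positivity, by linarith⟩
  have hcs : HasCompactSupport (fun x => (χ x : ℂ) * (𝓕 g : 𝓢(ℝ, ℂ)) x) := by
    refine HasCompactSupport.mul_right (χ.hasCompactSupport.comp_left (g := Complex.ofReal) ?_)
    simp
  have hcd : ContDiff ℝ ∞ (fun x => (χ x : ℂ) * (𝓕 g : 𝓢(ℝ, ℂ)) x) :=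
    (Complex.ofRealCLM.contDiff.comp χ.contDiff).mul ((𝓕 g : 𝓢(ℝ, ℂ)).smooth ⊤)
  let η : 𝓢(ℝ, ℂ) := hcs.toSchwartzMap hcd
  have hη : ∀ x, η x = (χ x : ℂ) * (𝓕 g : 𝓢(ℝ, ℂ)) x := fun x => rfl
  refine ⟨g - 𝓕⁻ η, moment_eq_zero_of_fourier_eventually_zero _ ?_, fun t => ?_⟩
  · rw [sub_eq_add_neg, ← neg_one_smul ℂ (𝓕⁻ η), FourierTransform.fourier_add,
      FourierTransform.fourier_smul, FourierTransform.fourier_fourierInv_eq]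
    filter_upwards [χ.eventuallyEq_one] with x hx
    simp [hη, hx]
  · have h1 : g t - (g - 𝓕⁻ η) t = 𝓕⁻ (η : ℝ → ℂ) t := by
      rw [← SchwartzMap.fourierInv_coe]; simp
    rw [h1, Real.fourierInv_eq]
    have h2 : ∀ x, ‖η x‖ ≤ (Metric.ball (0 : ℝ) δ).indicator (fun _ => M) x := fun x => by
      by_cases hx : x ∈ Metric.ball (0 : ℝ) δ
      · rw [Set.indicator_of_mem hx, hη, norm_mul]
        have : ‖(χ x : ℂ)‖ ≤ 1 := by
          rw [Complex.norm_real, Real.norm_of_nonneg χ.nonneg]; exact χ.le_one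
        calc _ ≤ 1 * M := by gcongr; exact hM x
          _ = M := one_mul M
      · rw [Set.indicator_of_notMem hx, hη, χ.zero_of_le_dist (by simpa using hx)]
        simp
    calc _ ≤ ∫ x, ‖η x‖ := by
          refine (norm_integral_le_integral_norm _).trans (le_of_eq ?_)
          simp [Circle.norm_smul]
      _ ≤ ∫ x, (Metric.ball (0 : ℝ) δ).indicator (fun _ => M) x := by
          refine integral_mono η.integrable.norm ?_ h2
          exact (integrable_indicator_iff Metric.isOpen_ball.measurableSet).2
            (integrableOn_const measure_ball_lt_top.ne)
      _ = 2 * δ * M := by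
          rw [integral_indicator Metric.isOpen_ball.measurableSet]
          simp [Real.volume_real_ball hδ0.le]
      _ = ε / 2 := by rw [hδ]; field_simp; norm_num
      _ < ε := by linarith

/-- Both parities at once: `s = 1` is the even case, `s = -1` the odd one. -/
theorem exists_lizorkin_approx_of_parity (s : ℂ) (hs : s * s = 1) (f : ℝ → ℂ) (hf : Continuous f)
    (h0 : Tendsto f (cocompact ℝ) (𝓝 0)) (hp : ∀ t, f (-t) = s * f t) (ε : ℝ) (hε : 0 < ε) :
    ∃ φ : 𝓢(ℝ, ℂ), (∀ t, φ (-t) = s * φ t) ∧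
      (∀ k : ℕ, ∫ t : ℝ, (t : ℂ) ^ k * φ t = 0) ∧ ∀ t, ‖f t - φ t‖ < ε := by
  obtain ⟨g, hg⟩ := exists_schwartz_approx f hf h0 (ε / 2) (by positivity)
  obtain ⟨φ, hφ, hgφ⟩ := exists_lizorkin_approx g (ε / 2) (by positivity)
  have hfφ : ∀ t, ‖f t - φ t‖ < ε := fun t => by
    have := norm_sub_le_norm_sub_add_norm_sub (f t) (g t) (φ t)
    linarith [hg t, hgφ t]
  let ψ : 𝓢(ℝ, ℂ) :=
    SchwartzMap.compCLMOfContinuousLinearEquiv ℂ (ContinuousLinearEquiv.neg ℝ) φ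
  have hψ : ∀ t, ψ t = φ (-t) := fun t => rfl
  have hval : ∀ t, ((2⁻¹ : ℂ) • (φ + s • ψ)) t = 2⁻¹ * (φ t + s * φ (-t)) := fun t => by
    simp [hψ, mul_add]
  have hi : ∀ (θ : 𝓢(ℝ, ℂ)) (k : ℕ), Integrable (fun t : ℝ => (t : ℂ) ^ k * θ t) := fun θ k => by
    refine (θ.integrable_pow_mul volume k).mono' (by fun_prop) (ae_of_all _ fun x => ?_)
    simp
  refine ⟨(2⁻¹ : ℂ) • (φ + s • ψ), fun t => ?_, fun k => ?_, fun t => ?_⟩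
  · rw [hval, hval, neg_neg]
    linear_combination (-2⁻¹ * φ (-t)) * hs
  · have h1 : ∫ t : ℝ, (t : ℂ) ^ k * ψ t = 0 := by
      rw [← integral_neg_eq_self]
      have : ∀ t : ℝ, ((-t : ℝ) : ℂ) ^ k * ψ (-t) = (-1) ^ k * ((t : ℂ) ^ k * φ t) := fun t => by
        rw [hψ, neg_neg, Complex.ofReal_neg, neg_pow, mul_assoc]
      simp_rw [this]
      rw [integral_const_mul, hφ, mul_zero]
    have h2 : ∀ t : ℝ, (t : ℂ) ^ k * ((2⁻¹ : ℂ) • (φ + s • ψ)) t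
        = 2⁻¹ * ((t : ℂ) ^ k * φ t) + (2⁻¹ * s) * ((t : ℂ) ^ k * ψ t) := fun t => by
      rw [hval, hψ]; ring
    simp_rw [h2]
    rw [integral_add ((hi φ k).const_mul _) ((hi ψ k).const_mul _), integral_const_mul,
      integral_const_mul, hφ, h1]
    simp
  · have hs1 : ‖s‖ = 1 := by
      have : ‖s‖ * ‖s‖ = 1 := by rw [← norm_mul, hs, norm_one]
      nlinarith [norm_nonneg s]
    have h1 : f t - ((2⁻¹ : ℂ) • (φ + s • ψ)) t
        = 2⁻¹ * ((f t - φ t) + s * (f (-t) - φ (-t))) := by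
      rw [hval, hp]
      linear_combination (-2⁻¹ * f t) * hs
    rw [h1, norm_mul]
    have h2 := norm_add_le (f t - φ t) (s * (f (-t) - φ (-t)))
    rw [norm_mul, hs1, one_mul] at h2
    have h3 : ‖(2⁻¹ : ℂ)‖ = 2⁻¹ := by simp
    rw [h3]
    linarith [hfφ t, hfφ (-t)]

/-- Even (respectively odd) Lizorkin functions on `ℝ` are dense in the even
(respectively odd) continuous functions vanishing at infinity. -/
theorem evenOdd_lizorkin_dense :
    (∀ f : ℝ → ℂ, Continuous f → Tendsto f (cocompact ℝ) (𝓝 0) →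
      (∀ t, f (-t) = f t) → ∀ ε : ℝ, 0 < ε →
      ∃ φ : SchwartzMap ℝ ℂ,
        (∀ t, φ (-t) = φ t) ∧
        (∀ k : ℕ, ∫ t : ℝ, (t : ℂ) ^ k * φ t = 0) ∧
        ∀ t, ‖f t - φ t‖ < ε) ∧
    (∀ f : ℝ → ℂ, Continuous f → Tendsto f (cocompact ℝ) (𝓝 0) →
      (∀ t, f (-t) = -f t) → ∀ ε : ℝ, 0 < ε →
      ∃ φ : SchwartzMap ℝ ℂ,
        (∀ t, φ (-t) = -φ t) ∧
        (∀ k : ℕ, ∫ t : ℝ, (t : ℂ) ^ k * φ t = 0) ∧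
        ∀ t, ‖f t - φ t‖ < ε) := by
  refine ⟨fun f hf h0 hp ε hε => ?_, fun f hf h0 hp ε hε => ?_⟩
  · simpa using exists_lizorkin_approx_of_parity 1 (by norm_num) f hf h0 (by simpa using hp) ε hε
  · simpa using
      exists_lizorkin_approx_of_parity (-1) (by norm_num) f hf h0 (by simpa using hp) ε hε
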